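/- arXiv:1907.12403 — 2 statements merged into one kernel-verified Lean document; each statement's English description precedes it below -/
import Mathlib

section
/- ρ(Λ) < 1 if and only if for every N×N block matrix Z = [Z_{ij}] whose blocks Z_{ij} ∈ 𝔽^{n_x×n_x} are all Hermitian positive definite, there exists a unique N×N block matrix Y = [Y_{ij}] whose blocks Y_{ij} are all Hermitian positive definite such that Y − L(Y) = Z. -/
/-!
The operator `L` is completely positive: with `V_ℓ = A + B K_ℓ`,
`L_{ij}(S) = p_{ij} ∑_ℓ (νh_i V_ℓ S_{ℓi} V_ℓ^* + (1 - νh_i) A S_{ℓi} A^*)` (`Lop_eq`).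
By Gelfand's formula `ρ(Λ) < 1` is equivalent to `Λ^k → 0` (`specRadK_lt_one_iff`), that is, to
`L^k(S) → 0` for all block matrices `S` (`tendsto_pow_iff`). Both directions then rest on the
identity `Y = ∑_{k<n} L^k(Z) + L^n(Y)`, valid whenever `Y - L(Y) = Z` (`sesq_telescope`).

If `Y > 0` solves the equation for `Z = I`, the identity and positivity bound the partial sums of
`∑_k x^* L^k(I) x`, so `L^k(I) → 0`. An arbitrary `S` satisfies
`|x^* S y| ≤ C (x^* x + y^* y)`, and such a domination is preserved by `L`, so `L^k(S) → 0`
(`tendsto_of_solution`). Domination of sesquilinear forms is used instead of the Loewner order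
because over `ℝ` the Hermitian matrices do not span all matrices.

Conversely, if `L^k → 0`, then `1 - L` is injective, hence bijective by finite dimension. Letting
`n → ∞` in the identity shows `Y ≥ Z > 0` (`posDef_of_tendsto`).
-/

open MeasureTheory Matrix ProbabilityTheory Filter
open scoped BigOperators ComplexOrder

noncomputable section

/-- The canonical ring homomorphism from an `RCLike` field (`ℝ` or `ℂ`) to `ℂ`. -/
def rcToComplex (𝕜 : Type*) [RCLike 𝕜] : 𝕜 →+* ℂ where
  toFun z := ⟨RCLike.re z, RCLike.im z⟩
  map_one' := by simp [Complex.ext_iff]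
  map_mul' z w := by simp [Complex.ext_iff, RCLike.mul_re, RCLike.mul_im]
  map_zero' := by simp [Complex.ext_iff]
  map_add' z w := by simp [Complex.ext_iff]

/-- Spectral radius of a complex square matrix: the largest absolute value of its
(complex) eigenvalues. -/
def specRad {n : Type*} [Fintype n] [DecidableEq n] (M : Matrix n n ℂ) : ℝ :=
  sSup ((fun z => ‖z‖) '' spectrum ℂ M)

/-- Spectral radius of a square matrix over `ℝ` or `ℂ`, computed over `ℂ`. -/
def specRadK {𝕜 : Type*} [RCLike 𝕜] {n : Type*} [Fintype n] [DecidableEq n]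
    (M : Matrix n n 𝕜) : ℝ :=
  specRad (M.map (rcToComplex 𝕜))

variable {𝕜 : Type*} [RCLike 𝕜]

/-- `vec²` of an `N × N` array of `n_x × n_x` blocks `S = [S_{ℓi}]` (block `S ℓ i` sits in
block-row `ℓ` and block-column `i`): the index `((i, ℓ), (c, r))` addresses the entry in row `r`
and column `c` of the block `S_{ℓ i}`, corresponding to the stacking
`vec(S₁₁),…,vec(S_{N1}), vec(S₁₂),…,vec(S_{NN})` with column-major `vec`. -/
def vec2 {N nx : ℕ} (S : Fin N → Fin N → Matrix (Fin nx) (Fin nx) 𝕜) :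
    (Fin N × Fin N) × Fin nx × Fin nx → 𝕜 :=
  fun q => S q.1.2 q.1.1 q.2.2 q.2.1

/-- `vec²` of an `N × N` array of vectors in `𝕜^{n_x}`. -/
def vec2v {N nx : ℕ} (m : Fin N → Fin N → (Fin nx → 𝕜)) :
    (Fin N × Fin N) × Fin nx → 𝕜 :=
  fun q => m q.1.2 q.1.1 q.2

/-- The operator `L`, blockwise: `L_{ij}(S)`. -/
def Lop {N nx nu : ℕ} (A : Matrix (Fin nx) (Fin nx) 𝕜) (B : Matrix (Fin nx) (Fin nu) 𝕜)
    (K : Fin N → Matrix (Fin nu) (Fin nx) 𝕜) (p : Fin N → Fin N → ℝ) (νh : Fin N → ℝ)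
    (S : Fin N → Fin N → Matrix (Fin nx) (Fin nx) 𝕜) (i j : Fin N) :
    Matrix (Fin nx) (Fin nx) 𝕜 :=
  ((p i j : ℝ) : 𝕜) •
    (A * (∑ ℓ, S ℓ i) * Aᴴ
      + ((νh i : ℝ) : 𝕜) • (B * (∑ ℓ, K ℓ * S ℓ i * (K ℓ)ᴴ) * Bᴴ)
      + ((νh i : ℝ) : 𝕜) • (A * (∑ ℓ, S ℓ i * (K ℓ)ᴴ) * Bᴴ)
      + ((νh i : ℝ) : 𝕜) • (B * (∑ ℓ, K ℓ * S ℓ i) * Aᴴ))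

/-- The operator `T`, blockwise: `T_{ℓi}(S)`. -/
def Tadj {N nx nu : ℕ} (A : Matrix (Fin nx) (Fin nx) 𝕜) (B : Matrix (Fin nx) (Fin nu) 𝕜)
    (K : Fin N → Matrix (Fin nu) (Fin nx) 𝕜) (p : Fin N → Fin N → ℝ) (νh : Fin N → ℝ)
    (S : Fin N → Fin N → Matrix (Fin nx) (Fin nx) 𝕜) (ℓ i : Fin N) :
    Matrix (Fin nx) (Fin nx) 𝕜 :=
  Aᴴ * (∑ j, ((p i j : ℝ) : 𝕜) • S i j) * A
    + ((νh i : ℝ) : 𝕜) • ((K ℓ)ᴴ * Bᴴ * (∑ j, ((p i j : ℝ) : 𝕜) • S i j) * (B * K ℓ))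
    + ((νh i : ℝ) : 𝕜) • ((K ℓ)ᴴ * Bᴴ * (∑ j, ((p i j : ℝ) : 𝕜) • S i j) * A)
    + ((νh i : ℝ) : 𝕜) • (Aᴴ * (∑ j, ((p i j : ℝ) : 𝕜) • S i j) * (B * K ℓ))

/-- σ-algebra of the "past" at time `k`: generated by `θ_{-1},…,θ_{k-1}` and `ν_0,…,ν_{k-1}`. -/
def pastSig {Ω : Type*} {N : ℕ} (θ : ℤ → Ω → Fin N) (ν : ℕ → Ω → Bool) (k : ℕ) :
    MeasurableSpace Ω :=
  (⨆ t : ℤ, ⨆ (_ : -1 ≤ t), ⨆ (_ : t < (k : ℤ)), MeasurableSpace.comap (θ t) ⊤) ⊔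
    ⨆ t : ℕ, ⨆ (_ : t < k), MeasurableSpace.comap (ν t) ⊤

/-- σ-algebra generated by `θ_{-1},…,θ_{k-1}`. -/
def pastTheta {Ω : Type*} {N : ℕ} (θ : ℤ → Ω → Fin N) (k : ℤ) : MeasurableSpace Ω :=
  ⨆ t : ℤ, ⨆ (_ : -1 ≤ t), ⨆ (_ : t < k), MeasurableSpace.comap (θ t) ⊤

/-- σ-algebra generated by the pairs `(θ_t, θ_{t-1})` for `0 ≤ t ≤ k-1`. -/
def pastPair {Ω : Type*} {N : ℕ} (θ : ℤ → Ω → Fin N) (k : ℕ) : MeasurableSpace Ω :=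
  ⨆ t : ℕ, ⨆ (_ : t < k),
    MeasurableSpace.comap (fun ω => (θ (t : ℤ) ω, θ ((t : ℤ) - 1) ω)) ⊤

/-- Indicator-weighted first moment `m_{ℓi}^{(k)} = E[x_k 1_{θ_k = i, θ_{k-1} = ℓ}]`. -/
def mMom {Ω : Type*} [MeasurableSpace Ω] (μ : Measure Ω) {N nx : ℕ}
    (θ : ℤ → Ω → Fin N) (x : ℕ → Ω → Fin nx → 𝕜) (k : ℕ) (ℓ i : Fin N) : Fin nx → 𝕜 :=
  fun r => ∫ ω in {ω | θ (k : ℤ) ω = i ∧ θ ((k : ℤ) - 1) ω = ℓ}, x k ω r ∂μ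

/-- Indicator-weighted second moment `M_{ℓi}^{(k)} = E[x_k x_k^* 1_{θ_k = i, θ_{k-1} = ℓ}]`. -/
def MMom {Ω : Type*} [MeasurableSpace Ω] (μ : Measure Ω) {N nx : ℕ}
    (θ : ℤ → Ω → Fin N) (x : ℕ → Ω → Fin nx → 𝕜) (k : ℕ) (ℓ i : Fin N) :
    Matrix (Fin nx) (Fin nx) 𝕜 :=
  Matrix.of fun r c =>
    ∫ ω in {ω | θ (k : ℤ) ω = i ∧ θ ((k : ℤ) - 1) ω = ℓ}, x k ω r * star (x k ω c) ∂μ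

/-- Joint probability `π_{ℓi}^{(k)} = Pr(θ_k = i, θ_{k-1} = ℓ)`. -/
def piP {Ω : Type*} [MeasurableSpace Ω] (μ : Measure Ω) {N : ℕ}
    (θ : ℤ → Ω → Fin N) (k : ℕ) (ℓ i : Fin N) : ℝ :=
  (μ {ω | θ (k : ℤ) ω = i ∧ θ ((k : ℤ) - 1) ω = ℓ}).toReal

/-- A measure on a real vector space is Gaussian if every real-linear functional pushes it
forward to a one-dimensional Gaussian law. -/
def IsGaussianLaw {E : Type*} [AddCommGroup E] [Module ℝ E] [MeasurableSpace E]
    (γ : Measure E) : Prop :=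
  ∀ L : E →ₗ[ℝ] ℝ, ∃ (m : ℝ) (v : NNReal), γ.map L = ProbabilityTheory.gaussianReal m v

/-! ### Spectral radius and powers -/

/-- In a complex Banach algebra the powers of `a` tend to zero exactly when the spectrum lies in
the open unit disc: Gelfand's formula gives one direction, spectral mapping for powers the other. -/
lemma spectrum_lt_one_iff_tendsto_pow {R : Type*} [NormedRing R] [NormedAlgebra ℂ R]
    [CompleteSpace R] [Nontrivial R] (a : R) :
    (∀ z ∈ spectrum ℂ a, ‖z‖ < 1) ↔ Tendsto (fun k : ℕ => a ^ k) atTop (nhds 0) := by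
  constructor
  · intro h
    have h1 : spectralRadius ℂ a < ((1 : NNReal) : ENNReal) :=
      spectrum.spectralRadius_lt_of_forall_lt a fun z hz => by
        rw [← NNReal.coe_lt_coe]; simpa using h z hz
    obtain ⟨r, hr1, hr2⟩ := ENNReal.lt_iff_exists_nnreal_btwn.1 h1
    have hr2' : (r : ℝ) < 1 := by exact_mod_cast hr2
    have hG := spectrum.pow_nnnorm_pow_one_div_tendsto_nhds_spectralRadius a
    rw [tendsto_zero_iff_norm_tendsto_zero]
    refine squeeze_zero' (Eventually.of_forall fun _ => norm_nonneg _) ?_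
      (tendsto_pow_atTop_nhds_zero_of_lt_one r.2 hr2')
    filter_upwards [hG.eventually_lt_const hr1, eventually_gt_atTop 0] with k hk hk0
    have hk0' : (k : ℝ) ≠ 0 := by positivity
    have h2 : ((‖a ^ k‖₊ : ENNReal) ^ (1 / k : ℝ)) ^ (k : ℝ) ≤ (r : ENNReal) ^ (k : ℝ) :=
      ENNReal.rpow_le_rpow hk.le (by positivity)
    rw [← ENNReal.rpow_mul, one_div, inv_mul_cancel₀ hk0', ENNReal.rpow_one,
      ENNReal.rpow_natCast] at h2
    exact_mod_cast h2
  · intro h z hz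
    rw [tendsto_zero_iff_norm_tendsto_zero] at h
    have h1 : Tendsto (fun k : ℕ => ‖a ^ k‖ * ‖(1 : R)‖) atTop (nhds 0) := by
      simpa using h.mul_const ‖(1 : R)‖
    obtain ⟨k, hk⟩ := (h1.eventually_lt_const one_pos).exists
    have h2 : ‖z ^ k‖ ≤ ‖a ^ k‖ * ‖(1 : R)‖ :=
      spectrum.norm_le_norm_mul_of_mem (spectrum.pow_mem_pow a k hz)
    by_contra! hz1
    rw [norm_pow] at h2
    linarith [one_le_pow₀ hz1 (n := k)]

lemma specRad_lt_one_iff {n : Type*} [Fintype n] [DecidableEq n] [Nonempty n]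
    (M : Matrix n n ℂ) :
    specRad M < 1 ↔ ∀ a b, Tendsto (fun k : ℕ => (M ^ k) a b) atTop (nhds 0) := by
  let _ : NormedRing (Matrix n n ℂ) := Matrix.linftyOpNormedRing
  let _ : NormedAlgebra ℂ (Matrix n n ℂ) := Matrix.linftyOpNormedAlgebra
  have : CompleteSpace (Matrix n n ℂ) := FiniteDimensional.complete ℂ _
  have h1 : Tendsto (fun k : ℕ => M ^ k) atTop (nhds 0) ↔
      ∀ a b, Tendsto (fun k : ℕ => (M ^ k) a b) atTop (nhds 0) := by
    refine tendsto_pi_nhds.trans (forall_congr' fun a => ?_)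
    exact tendsto_pi_nhds
  refine Iff.trans ?_ ((spectrum_lt_one_iff_tendsto_pow M).trans h1)
  -- finiteness and nonemptiness of the spectrum make the `sSup` a genuine maximum
  have hfin : ((fun z => ‖z‖) '' spectrum ℂ M).Finite := (Matrix.finite_spectrum M).image _
  have hne : ((fun z => ‖z‖) '' spectrum ℂ M).Nonempty := (spectrum.nonempty M).image _
  rw [specRad, hfin.csSup_lt_iff hne]
  simp

lemma norm_rcToComplex (z : 𝕜) : ‖rcToComplex 𝕜 z‖ = ‖z‖ := by
  rw [← sq_eq_sq₀ (norm_nonneg _) (norm_nonneg _), Complex.sq_norm,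
    Complex.normSq_apply, RCLike.norm_sq_eq_def (z := z)]
  rfl

lemma specRadK_lt_one_iff {n : Type*} [Fintype n] [DecidableEq n] [Nonempty n]
    (M : Matrix n n 𝕜) :
    specRadK M < 1 ↔ ∀ a b, Tendsto (fun k : ℕ => (M ^ k) a b) atTop (nhds 0) := by
  rw [specRadK, specRad_lt_one_iff]
  refine forall_congr' fun a => forall_congr' fun b => ?_
  rw [tendsto_zero_iff_norm_tendsto_zero,
    tendsto_zero_iff_norm_tendsto_zero (f := fun k : ℕ => (M ^ k) a b)]
  simp_rw [← Matrix.map_pow, Matrix.map_apply, norm_rcToComplex]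

/-! ### Sesquilinear forms of matrices -/

variable {N nx nu : ℕ}

/-- The sesquilinear form `x^* S y` of a square matrix `S`. -/
def sesq (x : Fin nx → 𝕜) (S : Matrix (Fin nx) (Fin nx) 𝕜) (y : Fin nx → 𝕜) : 𝕜 :=
  star x ⬝ᵥ S *ᵥ y

lemma sesq_add (x y : Fin nx → 𝕜) (S T : Matrix (Fin nx) (Fin nx) 𝕜) :
    sesq x (S + T) y = sesq x S y + sesq x T y := by
  simp [sesq, Matrix.add_mulVec, dotProduct_add]

lemma sesq_sub (x y : Fin nx → 𝕜) (S T : Matrix (Fin nx) (Fin nx) 𝕜) :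
    sesq x (S - T) y = sesq x S y - sesq x T y := by
  simp [sesq, Matrix.sub_mulVec, dotProduct_sub]

lemma sesq_smul (x y : Fin nx → 𝕜) (c : 𝕜) (S : Matrix (Fin nx) (Fin nx) 𝕜) :
    sesq x (c • S) y = c * sesq x S y := by
  simp [sesq, Matrix.smul_mulVec, dotProduct_smul]

lemma sesq_sum {ι : Type*} (s : Finset ι) (x y : Fin nx → 𝕜)
    (S : ι → Matrix (Fin nx) (Fin nx) 𝕜) :
    sesq x (∑ ℓ ∈ s, S ℓ) y = ∑ ℓ ∈ s, sesq x (S ℓ) y := by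
  simp [sesq, Matrix.sum_mulVec, dotProduct_sum]

lemma sesq_conj (x y : Fin nx → 𝕜) (V S : Matrix (Fin nx) (Fin nx) 𝕜) :
    sesq x (V * S * Vᴴ) y = sesq (Vᴴ *ᵥ x) S (Vᴴ *ᵥ y) := by
  simp only [sesq, Matrix.star_mulVec, Matrix.conjTranspose_conjTranspose,
    Matrix.dotProduct_mulVec, Matrix.vecMul_vecMul, Matrix.mul_assoc]

lemma sesq_single (r c : Fin nx) (S : Matrix (Fin nx) (Fin nx) 𝕜) :
    sesq (Pi.single r 1) S (Pi.single c 1) = S r c := by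
  simp [sesq]

lemma norm_sesq_le (x y : Fin nx → 𝕜) (S : Matrix (Fin nx) (Fin nx) 𝕜) :
    ‖sesq x S y‖ ≤ (∑ r, ∑ c, ‖S r c‖) * (RCLike.re (sesq x 1 x) + RCLike.re (sesq y 1 y)) := by
  have h1 : ∀ z : Fin nx → 𝕜, RCLike.re (sesq z 1 z) = ∑ r, ‖z r‖ ^ 2 := by
    intro z
    simp only [sesq, Matrix.one_mulVec, dotProduct, Pi.star_apply, map_sum, RCLike.star_def,
      RCLike.conj_mul]
    refine Finset.sum_congr rfl fun r _ => ?_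
    norm_cast
  have h2 : ∀ (z : Fin nx → 𝕜) r, ‖z r‖ ^ 2 ≤ ∑ r, ‖z r‖ ^ 2 := fun z r =>
    Finset.single_le_sum (f := fun r => ‖z r‖ ^ 2) (fun _ _ => by positivity) (Finset.mem_univ r)
  rw [h1, h1, Finset.sum_mul]
  simp only [sesq, dotProduct, Matrix.mulVec, Finset.mul_sum]
  refine (norm_sum_le _ _).trans (Finset.sum_le_sum fun r _ => ?_)
  rw [Finset.sum_mul]
  refine (norm_sum_le _ _).trans (Finset.sum_le_sum fun c _ => ?_)
  simp only [norm_mul, Pi.star_apply, norm_star]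
  have h3 : ‖x r‖ * ‖y c‖ ≤ ∑ r, ‖x r‖ ^ 2 + ∑ r, ‖y r‖ ^ 2 := by
    nlinarith [h2 x r, h2 y c, sq_nonneg (‖x r‖ - ‖y c‖), sq_nonneg (‖x r‖), sq_nonneg (‖y c‖)]
  nlinarith [mul_le_mul_of_nonneg_left h3 (norm_nonneg (S r c))]

lemma Matrix.PosDef.sesq_nonneg {M : Matrix (Fin nx) (Fin nx) 𝕜} (hM : M.PosDef)
    (x : Fin nx → 𝕜) : 0 ≤ RCLike.re (sesq x M x) :=
  (RCLike.nonneg_iff.1 (hM.posSemidef.dotProduct_mulVec_nonneg x)).1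

lemma star_sesq_self {M : Matrix (Fin nx) (Fin nx) 𝕜} (hM : M.IsHermitian)
    (x : Fin nx → 𝕜) : star (sesq x M x) = sesq x M x := by
  rw [sesq, ← star_dotProduct, Matrix.star_mulVec, hM.eq, Matrix.dotProduct_mulVec]

/-! ### Complete positivity of the operator -/

section Operator

variable (A : Matrix (Fin nx) (Fin nx) 𝕜) (B : Matrix (Fin nx) (Fin nu) 𝕜)
  (K : Fin N → Matrix (Fin nu) (Fin nx) 𝕜) (p : Fin N → Fin N → ℝ) (νh : Fin N → ℝ)

/-- The Kraus form of the operator: a combination of congruences `V S V^*` whose coefficients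
are nonnegative as soon as `p ≥ 0` and `0 ≤ νh ≤ 1`. -/
lemma Lop_eq (S : Fin N → Fin N → Matrix (Fin nx) (Fin nx) 𝕜) (i j : Fin N) :
    Lop A B K p νh S i j = ∑ ℓ,
      (((p i j * νh i : ℝ) : 𝕜) • ((A + B * K ℓ) * S ℓ i * (A + B * K ℓ)ᴴ)
        + ((p i j * (1 - νh i) : ℝ) : 𝕜) • (A * S ℓ i * Aᴴ)) := by
  rw [Lop]
  simp only [Matrix.mul_sum, Matrix.sum_mul, Finset.smul_sum, ← Finset.sum_add_distrib]
  refine Finset.sum_congr rfl fun ℓ _ => ?_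
  simp only [Matrix.conjTranspose_add, Matrix.conjTranspose_mul, Matrix.add_mul, Matrix.mul_add,
    Matrix.mul_assoc, smul_add, smul_smul]
  push_cast
  module

/-- `Lop` as a linear map on block matrices. -/
def LopLin : Module.End 𝕜 (Fin N → Fin N → Matrix (Fin nx) (Fin nx) 𝕜) where
  toFun := Lop A B K p νh
  map_add' S T := by
    ext1 i; ext1 j
    simp only [Lop_eq, Pi.add_apply, ← Finset.sum_add_distrib, Matrix.mul_add, Matrix.add_mul,
      smul_add]
    exact Finset.sum_congr rfl fun ℓ _ => by abel
  map_smul' c S := by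
    ext1 i; ext1 j
    simp only [Lop_eq, Pi.smul_apply, Finset.smul_sum, Matrix.mul_smul, Matrix.smul_mul,
      smul_add, RingHom.id_apply]
    refine Finset.sum_congr rfl fun ℓ _ => ?_
    rw [smul_comm, smul_comm c]
    congr 1
    rw [smul_comm]

lemma LopLin_apply (S : Fin N → Fin N → Matrix (Fin nx) (Fin nx) 𝕜) :
    LopLin A B K p νh S = Lop A B K p νh S := rfl

lemma Lop_conjTranspose (S : Fin N → Fin N → Matrix (Fin nx) (Fin nx) 𝕜) (i j : Fin N) :
    Lop A B K p νh (fun i j => (S i j)ᴴ) i j = (Lop A B K p νh S i j)ᴴ := by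
  simp only [Lop_eq, Matrix.conjTranspose_sum, Matrix.conjTranspose_add,
    Matrix.conjTranspose_smul, Matrix.conjTranspose_mul, Matrix.conjTranspose_conjTranspose,
    Matrix.mul_assoc, RCLike.star_def, RCLike.conj_ofReal]

/-- `S` is dominated by `P` when `|x^* S y| ≤ re (x^* P x) + re (y^* P y)` blockwise, for all
vectors `x, y`. This replaces the order interval `-P ≤ S ≤ P` and makes sense for arbitrary,
not necessarily Hermitian, `S`; taking `S = 0` it says that the forms of `P` are nonnegative. -/
def Dominated (S P : Fin N → Fin N → Matrix (Fin nx) (Fin nx) 𝕜) : Prop :=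
  ∀ i j x y, ‖sesq x (S i j) y‖ ≤ RCLike.re (sesq x (P i j) x) + RCLike.re (sesq y (P i j) y)

variable {A B K p νh}

lemma Dominated.Lop (hp : ∀ i j, 0 ≤ p i j) (hν : ∀ i, νh i ∈ Set.Icc (0 : ℝ) 1)
    {S P : Fin N → Fin N → Matrix (Fin nx) (Fin nx) 𝕜} (h : Dominated S P) :
    Dominated (Lop A B K p νh S) (Lop A B K p νh P) := by
  intro i j x y
  have h1 : 0 ≤ p i j * νh i := mul_nonneg (hp i j) (hν i).1
  have h2 : 0 ≤ p i j * (1 - νh i) := mul_nonneg (hp i j) (sub_nonneg.2 (hν i).2)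
  simp only [Lop_eq, sesq_sum, sesq_add, sesq_smul, sesq_conj, map_sum, map_add,
    RCLike.re_ofReal_mul, ← Finset.sum_add_distrib]
  refine (norm_sum_le _ _).trans (Finset.sum_le_sum fun ℓ _ => ?_)
  refine (norm_add_le _ _).trans ?_
  rw [norm_mul, norm_mul, RCLike.norm_of_nonneg h1, RCLike.norm_of_nonneg h2]
  have h3 := mul_le_mul_of_nonneg_left (h ℓ i ((A + B * K ℓ)ᴴ *ᵥ x) ((A + B * K ℓ)ᴴ *ᵥ y)) h1
  have h4 := mul_le_mul_of_nonneg_left (h ℓ i (Aᴴ *ᵥ x) (Aᴴ *ᵥ y)) h2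
  linarith

lemma Dominated.pow (hp : ∀ i j, 0 ≤ p i j) (hν : ∀ i, νh i ∈ Set.Icc (0 : ℝ) 1)
    {S P : Fin N → Fin N → Matrix (Fin nx) (Fin nx) 𝕜} (h : Dominated S P) (k : ℕ) :
    Dominated ((LopLin A B K p νh ^ k) S) ((LopLin A B K p νh ^ k) P) := by
  induction k with
  | zero => simpa using h
  | succ k ih =>
    rw [pow_succ', Module.End.mul_apply, Module.End.mul_apply]
    exact ih.Lop hp hν

lemma sesq_pow_nonneg (hp : ∀ i j, 0 ≤ p i j) (hν : ∀ i, νh i ∈ Set.Icc (0 : ℝ) 1)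
    {P : Fin N → Fin N → Matrix (Fin nx) (Fin nx) 𝕜} (hP : ∀ i j, (P i j).PosDef) (k : ℕ)
    (i j : Fin N) (x : Fin nx → 𝕜) :
    0 ≤ RCLike.re (sesq x ((LopLin A B K p νh ^ k) P i j) x) := by
  have h0 : Dominated 0 P := fun i j x y => by
    simpa [sesq] using add_nonneg ((hP i j).sesq_nonneg x) ((hP i j).sesq_nonneg y)
  have h1 := h0.pow (A := A) (B := B) (K := K) hp hν k i j x x
  linarith [norm_nonneg (sesq x ((LopLin A B K p νh ^ k) 0 i j) x)]

/-! ### Orbits of the operator -/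

/-- Iterating `Y = Z + L(Y)` gives `Y = ∑_{k<n} L^k(Z) + L^n(Y)`; tested on `x`. -/
lemma sesq_telescope {Y Z : Fin N → Fin N → Matrix (Fin nx) (Fin nx) 𝕜}
    (h : ∀ i j, Y i j - Lop A B K p νh Y i j = Z i j) (n : ℕ) (i j : Fin N) (x : Fin nx → 𝕜) :
    sesq x (Y i j) x = ∑ k ∈ Finset.range n, sesq x ((LopLin A B K p νh ^ k) Z i j) x
      + sesq x ((LopLin A B K p νh ^ n) Y i j) x := by
  have hZ : Z = Y - LopLin A B K p νh Y := by
    ext1 i; ext1 j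
    exact (h i j).symm
  have h1 : ∀ k, (LopLin A B K p νh ^ k) Z i j
      = (LopLin A B K p νh ^ k) Y i j - (LopLin A B K p νh ^ (k + 1)) Y i j := by
    intro k
    rw [hZ, map_sub, pow_succ (n := k), Module.End.mul_apply]
    rfl
  simp only [h1, sesq_sub]
  rw [Finset.sum_range_sub']
  simp

lemma vec2_pow {Λ : Matrix ((Fin N × Fin N) × Fin nx × Fin nx)
      ((Fin N × Fin N) × Fin nx × Fin nx) 𝕜}
    (hΛ : ∀ S : Fin N → Fin N → Matrix (Fin nx) (Fin nx) 𝕜,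
      vec2 (Lop A B K p νh S) = Matrix.mulVec Λ (vec2 S))
    (S : Fin N → Fin N → Matrix (Fin nx) (Fin nx) 𝕜) (k : ℕ) :
    vec2 ((LopLin A B K p νh ^ k) S) = (Λ ^ k) *ᵥ vec2 S := by
  induction k with
  | zero => simp
  | succ k ih =>
    rw [pow_succ', Module.End.mul_apply, LopLin_apply, hΛ, ih, pow_succ', Matrix.mulVec_mulVec]

/-- `Λ^k → 0` entrywise iff `L^k(S) → 0` for every block matrix `S`. -/
lemma tendsto_pow_iff {Λ : Matrix ((Fin N × Fin N) × Fin nx × Fin nx)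
      ((Fin N × Fin N) × Fin nx × Fin nx) 𝕜}
    (hΛ : ∀ S : Fin N → Fin N → Matrix (Fin nx) (Fin nx) 𝕜,
      vec2 (Lop A B K p νh S) = Matrix.mulVec Λ (vec2 S)) :
    (∀ a b, Tendsto (fun k : ℕ => (Λ ^ k) a b) atTop (nhds 0)) ↔
      ∀ (S : Fin N → Fin N → Matrix (Fin nx) (Fin nx) 𝕜) i j r c,
        Tendsto (fun k : ℕ => (LopLin A B K p νh ^ k) S i j r c) atTop (nhds 0) := by
  constructor
  · intro h S i j r c
    have h1 : ∀ k, (LopLin A B K p νh ^ k) S i j r c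
        = ∑ b, (Λ ^ k) ((j, i), (c, r)) b * vec2 S b := fun k =>
      congrFun (vec2_pow hΛ S k) ((j, i), (c, r))
    simp only [h1]
    simpa using tendsto_finsetSum Finset.univ fun b _ =>
      (h ((j, i), (c, r)) b).mul_const (vec2 S b)
  · rintro h ⟨⟨j, i⟩, c, r⟩ b
    have h1 := h (fun i j => Matrix.of fun r c =>
      (Pi.single b 1 : (Fin N × Fin N) × Fin nx × Fin nx → 𝕜) ((j, i), (c, r))) i j r c
    refine h1.congr fun k => ?_
    refine (congrFun (vec2_pow hΛ _ k) ((j, i), (c, r))).trans ?_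
    exact congrFun (Matrix.mulVec_single_one (Λ ^ k) b) ((j, i), (c, r))

lemma tendsto_sesq {S : ℕ → Matrix (Fin nx) (Fin nx) 𝕜}
    (h : ∀ r c, Tendsto (fun k => S k r c) atTop (nhds 0)) (x y : Fin nx → 𝕜) :
    Tendsto (fun k => sesq x (S k) y) atTop (nhds 0) := by
  simp only [sesq, dotProduct, Matrix.mulVec]
  rw [show (0 : 𝕜) = ∑ r : Fin nx, star x r * ∑ c : Fin nx, 0 * y c by simp]
  exact tendsto_finsetSum _ fun r _ => (tendsto_finsetSum _ fun c _ =>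
    (h r c).mul_const (y c)).const_mul (star x r)

/-! ### Lyapunov solutions and convergence of orbits -/

/-- If the equation with right-hand side `I` is solvable by a positive definite `Y`, then the
partial sums of `∑ x^* L^k(I) x` are bounded by `x^* Y x`, so `L^k(I) → 0`; every `S` is dominated
by a multiple of `I`, hence `L^k(S) → 0`. -/
lemma tendsto_of_solution (hp : ∀ i j, 0 ≤ p i j) (hν : ∀ i, νh i ∈ Set.Icc (0 : ℝ) 1)
    {Y : Fin N → Fin N → Matrix (Fin nx) (Fin nx) 𝕜} (hY : ∀ i j, (Y i j).PosDef)
    (h : ∀ i j, Y i j - Lop A B K p νh Y i j = 1)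
    (S : Fin N → Fin N → Matrix (Fin nx) (Fin nx) 𝕜) (i j : Fin N) (r c : Fin nx) :
    Tendsto (fun k : ℕ => (LopLin A B K p νh ^ k) S i j r c) atTop (nhds 0) := by
  set I : Fin N → Fin N → Matrix (Fin nx) (Fin nx) 𝕜 := fun _ _ => 1 with hI
  have hIpos : ∀ i j, (I i j).PosDef := fun _ _ => Matrix.PosDef.one
  have hlim : ∀ x : Fin nx → 𝕜, Tendsto
      (fun k => RCLike.re (sesq x ((LopLin A B K p νh ^ k) I i j) x)) atTop (nhds 0) := by
    intro x
    refine (summable_of_sum_range_le (c := RCLike.re (sesq x (Y i j) x))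
      (fun k => sesq_pow_nonneg hp hν hIpos k i j x) fun n => ?_).tendsto_atTop_zero
    have h1 := congrArg RCLike.re (sesq_telescope (Z := I) h n i j x)
    rw [map_add, map_sum] at h1
    linarith [sesq_pow_nonneg (A := A) (B := B) (K := K) hp hν hY n i j x]
  set C : ℝ := ∑ i, ∑ j, ∑ r, ∑ c, ‖S i j r c‖ with hC
  have hdom : Dominated S ((C : 𝕜) • I) := by
    intro i j x y
    have h1 : ∑ r, ∑ c, ‖S i j r c‖ ≤ C :=
      (Finset.single_le_sum (f := fun j => ∑ r, ∑ c, ‖S i j r c‖)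
        (fun _ _ => by positivity) (Finset.mem_univ j)).trans
      (Finset.single_le_sum (f := fun i => ∑ j, ∑ r, ∑ c, ‖S i j r c‖)
        (fun _ _ => by positivity) (Finset.mem_univ i))
    simp only [Pi.smul_apply, sesq_smul, RCLike.re_ofReal_mul, ← mul_add]
    exact (norm_sesq_le x y (S i j)).trans (mul_le_mul_of_nonneg_right h1
      (add_nonneg ((hIpos i j).sesq_nonneg x) ((hIpos i j).sesq_nonneg y)))
  refine squeeze_zero_norm (a := fun k =>
    C * RCLike.re (sesq (Pi.single r 1) ((LopLin A B K p νh ^ k) I i j) (Pi.single r 1))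
    + C * RCLike.re (sesq (Pi.single c 1) ((LopLin A B K p νh ^ k) I i j) (Pi.single c 1)))
    (fun k => ?_) ?_
  · have h1 := hdom.pow (A := A) (B := B) (K := K) hp hν k i j (Pi.single r 1) (Pi.single c 1)
    simpa only [map_smul, Pi.smul_apply, sesq_smul, RCLike.re_ofReal_mul, sesq_single] using h1
  · simpa using ((hlim _).const_mul C).add ((hlim _).const_mul C)

/-- If all orbits of `L` tend to zero, `1 - L` is injective, since `L D = D` forces
`D = L^k(D) → 0`. -/
lemma injective_of_tendsto
    (h : ∀ (S : Fin N → Fin N → Matrix (Fin nx) (Fin nx) 𝕜) i j r c,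
      Tendsto (fun k : ℕ => (LopLin A B K p νh ^ k) S i j r c) atTop (nhds 0)) :
    Function.Injective
      (1 - LopLin A B K p νh : Module.End 𝕜 (Fin N → Fin N → Matrix (Fin nx) (Fin nx) 𝕜)) := by
  rw [injective_iff_map_eq_zero]
  intro D hD
  have h1 : LopLin A B K p νh D = D := by
    rw [LinearMap.sub_apply, Module.End.one_apply, sub_eq_zero] at hD
    exact hD.symm
  have h2 : ∀ k : ℕ, (LopLin A B K p νh ^ k) D = D := by
    intro k
    induction k with
    | zero => simp
    | succ k ih => rw [pow_succ, Module.End.mul_apply, h1, ih]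
  ext i j r c
  have h3 := h D i j r c
  simp only [h2] at h3
  exact tendsto_nhds_unique tendsto_const_nhds h3

/-- If all orbits of `L` tend to zero, the solution of `Y - L(Y) = Z` with `Z` positive definite
is Hermitian (`Yᴴ` solves the same equation) and satisfies `Y ≥ Z`. -/
lemma posDef_of_tendsto (hp : ∀ i j, 0 ≤ p i j) (hν : ∀ i, νh i ∈ Set.Icc (0 : ℝ) 1)
    (h : ∀ (S : Fin N → Fin N → Matrix (Fin nx) (Fin nx) 𝕜) i j r c,
      Tendsto (fun k : ℕ => (LopLin A B K p νh ^ k) S i j r c) atTop (nhds 0))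
    {Y Z : Fin N → Fin N → Matrix (Fin nx) (Fin nx) 𝕜} (hZ : ∀ i j, (Z i j).PosDef)
    
    (hYZ : (1 - LopLin A B K p νh : Module.End 𝕜 _) Y = Z) (i j : Fin N) : (Y i j).PosDef := by
  have heq : ∀ i j, Y i j - Lop A B K p νh Y i j = Z i j := fun i j => by rw [← hYZ]; rfl
  have hherm : (fun i j => (Y i j)ᴴ) = Y := by
    refine injective_of_tendsto h ?_
    rw [hYZ]
    ext1 i; ext1 j
    change (Y i j)ᴴ - Lop A B K p νh (fun i j => (Y i j)ᴴ) i j = Z i j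
    rw [Lop_conjTranspose, ← Matrix.conjTranspose_sub, heq, (hZ i j).isHermitian.eq]
  have hH : (Y i j).IsHermitian := congrFun (congrFun hherm i) j
  refine Matrix.PosDef.of_dotProduct_mulVec_pos hH fun x hx => ?_
  have hle : RCLike.re (sesq x (Z i j) x) ≤ RCLike.re (sesq x (Y i j) x) := by
    have h1 : Tendsto (fun n => RCLike.re (sesq x (Y i j) x)
        - RCLike.re (sesq x ((LopLin A B K p νh ^ n) Y i j) x)) atTop
        (nhds (RCLike.re (sesq x (Y i j) x))) := by
      have h2 := (RCLike.continuous_re.tendsto (0 : 𝕜)).comp (tendsto_sesq (h Y i j) x x)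
      simpa using tendsto_const_nhds.sub h2
    refine ge_of_tendsto h1 (eventually_atTop.2 ⟨1, fun n hn => ?_⟩)
    have h3 := congrArg RCLike.re (sesq_telescope heq n i j x)
    rw [map_add, map_sum] at h3
    have h4 := Finset.single_le_sum
      (f := fun k => RCLike.re (sesq x ((LopLin A B K p νh ^ k) Z i j) x))
      (fun k _ => sesq_pow_nonneg hp hν hZ k i j x) (Finset.mem_range.2 hn)
    simp only [pow_zero, Module.End.one_apply] at h4
    linarith
  have hpos : 0 < RCLike.re (sesq x (Z i j) x) :=
    (RCLike.pos_iff.1 ((hZ i j).dotProduct_mulVec_pos hx)).1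
  change 0 < sesq x (Y i j) x
  exact RCLike.pos_iff.2 ⟨hpos.trans_le hle, RCLike.conj_eq_iff_im.1 (star_sesq_self hH x)⟩

end Operator

/-- Lyapunov-type characterization: `ρ(Λ) < 1` iff for every block matrix
`Z` with Hermitian positive definite blocks there is a unique block matrix `Y` with Hermitian
positive definite blocks such that `Y − L(Y) = Z`. -/
theorem specRad_lt_one_iff_lyapunov
    {𝕜 : Type*} [RCLike 𝕜]
    {N nx nu : ℕ} (hN : 1 ≤ N) (hnx : 1 ≤ nx) (hnu : 1 ≤ nu)
    (A : Matrix (Fin nx) (Fin nx) 𝕜) (B : Matrix (Fin nx) (Fin nu) 𝕜)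
    (K : Fin N → Matrix (Fin nu) (Fin nx) 𝕜)
    (p : Fin N → Fin N → ℝ) (hp_nonneg : ∀ i j, 0 ≤ p i j) (hp_row : ∀ i, ∑ j, p i j = 1)
    (νh : Fin N → ℝ) (hνh : ∀ i, νh i ∈ Set.Icc (0 : ℝ) 1)
    (Λ : Matrix ((Fin N × Fin N) × Fin nx × Fin nx) ((Fin N × Fin N) × Fin nx × Fin nx) 𝕜)
    (hΛ : ∀ S : Fin N → Fin N → Matrix (Fin nx) (Fin nx) 𝕜,
      vec2 (Lop A B K p νh S) = Matrix.mulVec Λ (vec2 S)) :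
    specRadK Λ < 1 ↔
      ∀ Z : Fin N → Fin N → Matrix (Fin nx) (Fin nx) 𝕜, (∀ i j, (Z i j).PosDef) →
        ∃! Y : Fin N → Fin N → Matrix (Fin nx) (Fin nx) 𝕜,
          (∀ i j, (Y i j).PosDef) ∧ ∀ i j, Y i j - Lop A B K p νh Y i j = Z i j := by
  have : Nonempty ((Fin N × Fin N) × Fin nx × Fin nx) :=
    ⟨((⟨0, hN⟩, ⟨0, hN⟩), ⟨0, hnx⟩, ⟨0, hnx⟩)⟩
  rw [specRadK_lt_one_iff, tendsto_pow_iff hΛ]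
  constructor
  · intro h Z hZ
    have hinj := injective_of_tendsto h
    obtain ⟨Y, hY⟩ := LinearMap.injective_iff_surjective.1 hinj Z
    refine ⟨Y, ⟨posDef_of_tendsto hp_nonneg hνh h hZ hY, fun i j => by rw [← hY]; rfl⟩, ?_⟩
    rintro Y' ⟨-, hY'⟩
    refine hinj (Eq.trans ?_ hY.symm)
    ext1 i; ext1 j
    exact hY' i j
  · intro h
    obtain ⟨Y, ⟨hY, hY1⟩, -⟩ := h (fun _ _ => 1) fun _ _ => Matrix.PosDef.one
    exact tendsto_of_solution hp_nonneg hνh hY hY1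
end
end

section
/- For the noisy closed-loop Markov jump linear system with one time-step delayed mode observations, the stacked second moments satisfy, for all k ≥ 0, vec²(M^{(k+1)}) = Λ vec²(M^{(k)}) + vec²(C^{(k)}), where C^{(k)} is the N×N block array with (i,j) block C^{(k)}_{ij} := p_{ij} (Σ_{ℓ=1}^N π_{ℓi}^{(k)}) Σ_w; moreover there exists a matrix Υ, independent of k, of the initial condition and of the law of the chain, such that vec²(C^{(k)}) = Υ vec²(Π^{(k)}) for all k, where Π^{(k)} := [π_{ℓi}^{(k)} · I_{n_x}]_{ℓ,i=1}^N. -/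
/-!
The state `x_k` is a function of `θ_{-1}, …, θ_{k-1}`, `ν_0, …, ν_{k-1}` and `w_0, …, w_{k-1}`.
Therefore, on the event `θ_{k+1} = j, ν_k = b, θ_k = i, θ_{k-1} = ℓ`, integrals of functions of `x_k`
equal `p_{ij} Pr(ν_k = b ∣ θ_k = i)` times their integrals on `θ_k = i, θ_{k-1} = ℓ`. The Markov
hypothesis gives this for functions of the chain and loss history only; the independence of the
noises and a π-λ argument extend it to functions of the past noises as well
(`setIntegral_eq_mul_of_indep`).

On that event `x_{k+1} = (A + b B K_ℓ) x_k + w_k`, where `w_k` is centred and independent of `x_k`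
and of the event. So the event contributes to `M_{ij}^{(k+1)}`
`p_{ij} Pr(ν_k = b ∣ θ_k = i) ((A + b B K_ℓ) M_{ℓi}^{(k)} (A + b B K_ℓ)ᴴ + π_{ℓi}^{(k)} Σ_w)`
(`setIntegral_add_noise`, `integral_quadForm`). Summation over `b` and `ℓ` yields
`L_{ij}(M^{(k)}) + C_{ij}^{(k)}` (`Lop_eq_sum`). Square integrability of `x_k`, needed throughout
because the Bochner integral of a non-integrable function is `0`, follows by induction on `k` from
that of the Gaussian noise.

The matrix `Υ` exists because `C^{(k)}` is linear in the scalars `π_{ℓi}^{(k)}`, each of which is an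
entry of `Π^{(k)}`.
-/

open MeasureTheory Matrix ProbabilityTheory Filter
open scoped BigOperators ComplexOrder

noncomputable section

variable {𝕜 : Type*} [RCLike 𝕜]

/-- Extension of a one-step Markov identity to integrands that also depend on independent noise.
If `μ (S ∩ E) = c μ (T ∩ E)` for all `E` in `m₁`, and `S`, `T` and `m₁` all lie in a σ-algebra `m₀`
independent of `m₂`, then the identity holds on the π-system of sets `E ∩ F` with `E` in `m₁` and `F`
in `m₂`, hence for every integrand measurable with respect to `m₁ ⊔ m₂`. -/
lemma setIntegral_eq_mul_of_indep {Ω : Type*} {mΩ : MeasurableSpace Ω} {μ : Measure Ω}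
    [IsProbabilityMeasure μ] {m₁ m₀ m₂ : MeasurableSpace Ω} (h₁₀ : m₁ ≤ m₀) (h₀ : m₀ ≤ mΩ)
    (h₂ : m₂ ≤ mΩ) (hind : Indep m₀ m₂ μ) {S T : Set Ω} (hS : MeasurableSet[m₀] S)
    (hT : MeasurableSet[m₀] T) {c : ℝ} (hc : 0 ≤ c)
    (hST : ∀ E, MeasurableSet[m₁] E → μ.real (S ∩ E) = c * μ.real (T ∩ E))
    {f : Ω → 𝕜} (hf : StronglyMeasurable[m₁ ⊔ m₂] f) :
    ∫ ω in S, f ω ∂μ = (c : 𝕜) * ∫ ω in T, f ω ∂μ := by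
  have hle : m₁ ⊔ m₂ ≤ mΩ := sup_le (h₁₀.trans h₀) h₂
  have hreal : ∀ E F, MeasurableSet[m₁] E → MeasurableSet[m₂] F →
      μ.real (S ∩ (E ∩ F)) = c * μ.real (T ∩ (E ∩ F)) := by
    intro E F hE hF
    have key : ∀ R, MeasurableSet[m₀] R → μ.real (R ∩ (E ∩ F)) = μ.real (R ∩ E) * μ.real F := by
      intro R hR
      rw [← Set.inter_assoc, measureReal_def, (Indep_iff _ _ _).1 hind _ _ (hR.inter (h₁₀ _ hE)) hF,
        ENNReal.toReal_mul]
      rfl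
    rw [key S hS, key T hT, hST E hE, mul_assoc]
  have hmeas : (μ.restrict S).trim hle = (c.toNNReal • μ.restrict T).trim hle := by
    refine @ext_of_generate_finite Ω (m₁ ⊔ m₂) _ _
      {D | ∃ E F, MeasurableSet[m₁] E ∧ MeasurableSet[m₂] F ∧ D = E ∩ F} ?_ ?_ ?_ ?_ ?_
    · apply le_antisymm
      · refine sup_le (fun E hE => ?_) (fun F hF => ?_)
        · exact MeasurableSpace.measurableSet_generateFrom
            ⟨E, Set.univ, hE, MeasurableSet.univ, by simp⟩
        · exact MeasurableSpace.measurableSet_generateFrom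
            ⟨Set.univ, F, MeasurableSet.univ, hF, by simp⟩
      · refine MeasurableSpace.generateFrom_le ?_
        rintro _ ⟨E, F, hE, hF, rfl⟩
        exact MeasurableSet.inter ((le_sup_left : m₁ ≤ m₁ ⊔ m₂) _ hE)
          ((le_sup_right : m₂ ≤ m₁ ⊔ m₂) _ hF)
    · rintro _ ⟨E, F, hE, hF, rfl⟩ _ ⟨E', F', hE', hF', rfl⟩ -
      exact ⟨E ∩ E', F ∩ F', hE.inter hE', hF.inter hF', Set.inter_inter_inter_comm _ _ _ _⟩
    · infer_instance
    · rintro _ ⟨E, F, hE, hF, rfl⟩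
      have hm : MeasurableSet[m₁ ⊔ m₂] (E ∩ F) :=
        MeasurableSet.inter ((le_sup_left : m₁ ≤ m₁ ⊔ m₂) _ hE)
          ((le_sup_right : m₂ ≤ m₁ ⊔ m₂) _ hF)
      rw [trim_measurableSet_eq hle hm, trim_measurableSet_eq hle hm,
        ← ENNReal.toReal_eq_toReal_iff' (by finiteness) (by finiteness)]
      have := hreal E F hE hF
      rw [Measure.smul_apply, Measure.restrict_apply (hle _ hm), Measure.restrict_apply (hle _ hm),
        Set.inter_comm _ S, Set.inter_comm _ T]
      simpa [measureReal_def, NNReal.smul_def, hc] using this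
    · have hm : MeasurableSet[m₁ ⊔ m₂] (Set.univ : Set Ω) := MeasurableSet.univ
      rw [trim_measurableSet_eq hle hm, trim_measurableSet_eq hle hm,
        ← ENNReal.toReal_eq_toReal_iff' (by finiteness) (by finiteness)]
      have := hreal Set.univ Set.univ MeasurableSet.univ MeasurableSet.univ
      simpa [measureReal_def, NNReal.smul_def, hc] using this
  rw [integral_trim hle hf, hmeas, ← integral_trim hle hf, integral_smul_nnreal_measure,
    NNReal.smul_def, Real.coe_toNNReal c hc, RCLike.real_smul_eq_coe_mul]

lemma integral_star_eq_zero {Ω : Type*} {mΩ : MeasurableSpace Ω} {μ : Measure Ω} {f : Ω → 𝕜}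
    (hf : ∫ ω, f ω ∂μ = 0) : ∫ ω, star (f ω) ∂μ = 0 := by
  have h : ∫ ω, star (f ω) ∂μ = star (∫ ω, f ω ∂μ) := integral_conj
  rw [h, hf, star_zero]

/-- Adding centred noise `v`, independent of `y` and of the event `S`, adds `μ(S) E[v vᴴ]` to the
second moment of `y` on `S`: both cross terms factor through `E[v] = 0`. -/
lemma setIntegral_add_noise {Ω : Type*} {mΩ : MeasurableSpace Ω} {μ : Measure Ω}
    [IsProbabilityMeasure μ] [MeasurableSpace 𝕜] [BorelSpace 𝕜] {n : ℕ}
    {m₃ mw : MeasurableSpace Ω} (h₃ : m₃ ≤ mΩ) (hw : mw ≤ mΩ) (hind : Indep m₃ mw μ)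
    {S : Set Ω} (hS : MeasurableSet[m₃] S) {y v : Ω → Fin n → 𝕜}
    (hy : ∀ a, Measurable[m₃] fun ω => y ω a) (hv : ∀ a, Measurable[mw] fun ω => v ω a)
    (hy2 : ∀ a, MemLp (fun ω => y ω a) 2 μ) (hv2 : ∀ a, MemLp (fun ω => v ω a) 2 μ)
    (hmean : ∀ a, ∫ ω, v ω a ∂μ = 0) (r c : Fin n) :
    ∫ ω in S, (y ω r + v ω r) * star (y ω c + v ω c) ∂μ
      = ∫ ω in S, y ω r * star (y ω c) ∂μ
        + (μ.real S : 𝕜) * ∫ ω, v ω r * star (v ω c) ∂μ := by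
  obtain rfl : ‹MeasurableSpace 𝕜› = RCLike.measurableSpace := BorelSpace.measurable_eq
  have hS' := h₃ _ hS
  have indepFun : ∀ f g : Ω → 𝕜, Measurable[m₃] f → Measurable[mw] g → IndepFun f g μ := by
    intro f g hf hg
    rw [IndepFun_iff_Indep]
    exact indep_of_indep_of_le_left (indep_of_indep_of_le_right hind hg.comap_le) hf.comap_le
  have prodInt : ∀ f g : Ω → 𝕜, MemLp f 2 μ → MemLp g 2 μ →
      Integrable (fun ω => f ω * star (g ω)) μ := fun f g hf hg => hf.integrable_mul hg.star
  have factor : ∀ f g : Ω → 𝕜, Measurable[m₃] f → Measurable[mw] g →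
      ∫ ω in S, f ω * g ω ∂μ = (∫ ω in S, f ω ∂μ) * ∫ ω, g ω ∂μ := by
    intro f g hf hg
    rw [← integral_indicator hS', ← integral_indicator hS']
    have hfi : Measurable[m₃] (S.indicator f) := hf.indicator hS
    rw [← (indepFun _ _ hfi hg).integral_fun_mul_eq_mul_integral
      (hfi.mono h₃ le_rfl).aestronglyMeasurable (hg.mono hw le_rfl).aestronglyMeasurable]
    congr 1 with ω
    by_cases h : ω ∈ S <;> simp [h]
  have hstar : Measurable (star : 𝕜 → 𝕜) := continuous_star.measurable
  have e : ∀ ω, (y ω r + v ω r) * star (y ω c + v ω c)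
      = y ω r * star (y ω c) + y ω r * star (v ω c) + star (y ω c) * v ω r
        + 1 * (v ω r * star (v ω c)) := by
    intro ω; rw [star_add]; ring
  simp_rw [e]
  have i1 := (prodInt _ _ (hy2 r) (hy2 c)).integrableOn (s := S)
  have i2 := (prodInt _ _ (hy2 r) (hv2 c)).integrableOn (s := S)
  have i3 : IntegrableOn (fun ω => star (y ω c) * v ω r) S μ := by
    simpa only [mul_comm] using (prodInt _ _ (hv2 r) (hy2 c)).integrableOn (s := S)
  have i4 : IntegrableOn (fun ω => 1 * (v ω r * star (v ω c))) S μ := by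
    simpa only [one_mul] using (prodInt _ _ (hv2 r) (hv2 c)).integrableOn (s := S)
  have hvv : Measurable[mw] fun ω => v ω r * star (v ω c) :=
    measurable_mul.comp ((hv r).prodMk (hstar.comp (hv c)))
  rw [integral_add (by exact (i1.add i2).add i3) i4, integral_add (by exact i1.add i2) i3,
    integral_add i1 i2,
    factor (fun ω => y ω r) (fun ω => star (v ω c)) (hy r) (hstar.comp (hv c)),
    factor (fun ω => star (y ω c)) (fun ω => v ω r) (hstar.comp (hy c)) (hv r),
    factor (fun _ => 1) (fun ω => v ω r * star (v ω c)) measurable_const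
      hvv, hmean r]
  rw [integral_star_eq_zero (hmean c)]
  simp [RCLike.real_smul_eq_coe_mul]

/-- A Gaussian law in the sense of real-linear functionals has square-integrable coordinates:
apply the functionals `Re v_r` and `Im v_r`. -/
lemma memLp_of_gaussianLaw {Ω : Type*} {mΩ : MeasurableSpace Ω} {μ : Measure Ω}
    [MeasurableSpace 𝕜] [BorelSpace 𝕜] {n : ℕ} {v : Ω → Fin n → 𝕜} (hv : Measurable v)
    (hG : IsGaussianLaw (μ.map v)) (r : Fin n) : MemLp (fun ω => v ω r) 2 μ := by
  have key : ∀ L : 𝕜 →ₗ[ℝ] ℝ, MemLp (fun ω => L (v ω r)) 2 μ := by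
    intro L
    obtain ⟨m, s, h⟩ := hG (L ∘ₗ (LinearMap.proj r : (Fin n → 𝕜) →ₗ[ℝ] 𝕜))
    have hLm : Measurable L := L.continuous_of_finiteDimensional.measurable
    have hm : Measurable (L ∘ₗ (LinearMap.proj r : (Fin n → 𝕜) →ₗ[ℝ] 𝕜)) :=
      hLm.comp (measurable_pi_apply r)
    have h2 : MemLp id 2 (gaussianReal m s) := memLp_id_gaussianReal 2
    rw [← h, Measure.map_map hm hv,
      memLp_map_measure_iff aestronglyMeasurable_id (hm.comp hv).aemeasurable] at h2
    exact h2
  rw [← memLp_re_im_iff]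
  exact ⟨key RCLike.reLm, key RCLike.imLm⟩

lemma integral_quadForm {Ω : Type*} {mΩ : MeasurableSpace Ω} {μ : Measure Ω} {n : ℕ}
    (G : Matrix (Fin n) (Fin n) 𝕜) {y : Ω → Fin n → 𝕜}
    (hy : ∀ a, MemLp (fun ω => y ω a) 2 μ) (r c : Fin n) :
    ∫ ω, (G *ᵥ y ω) r * star ((G *ᵥ y ω) c) ∂μ
      = (G * (Matrix.of fun r c => ∫ ω, y ω r * star (y ω c) ∂μ) * Gᴴ) r c := by
  have e : ∀ ω, (G *ᵥ y ω) r * star ((G *ᵥ y ω) c)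
      = ∑ b, ∑ a, G r a * star (G c b) * (y ω a * star (y ω b)) := by
    intro ω
    simp only [mulVec, dotProduct, star_sum, star_mul', Finset.sum_mul, Finset.mul_sum]
    refine Finset.sum_congr rfl fun b _ => Finset.sum_congr rfl fun a _ => by ring
  have hi : ∀ a b, Integrable (fun ω => y ω a * star (y ω b)) μ :=
    fun a b => (hy a).integrable_mul (hy b).star
  simp_rw [e]
  rw [integral_finsetSum _ fun b _ => integrable_finsetSum _ fun a _ => (hi a b).const_mul _]
  simp only [Matrix.mul_apply, Finset.sum_mul, conjTranspose_apply, of_apply]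
  refine Finset.sum_congr rfl fun b _ => ?_
  rw [integral_finsetSum _ fun a _ => (hi a b).const_mul _]
  refine Finset.sum_congr rfl fun a _ => ?_
  rw [integral_const_mul]
  ring

/-- `L_{ij}` as a sum over the loss outcome `q.1` and the previous mode `q.2` of the congruence
transforms by the closed-loop matrix `A + ν B K_ℓ`, weighted by their transition probabilities. -/
lemma Lop_eq_sum {N nx nu : ℕ} (A : Matrix (Fin nx) (Fin nx) 𝕜) (B : Matrix (Fin nx) (Fin nu) 𝕜)
    (K : Fin N → Matrix (Fin nu) (Fin nx) 𝕜) (p : Fin N → Fin N → ℝ) (νh : Fin N → ℝ)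
    (S : Fin N → Fin N → Matrix (Fin nx) (Fin nx) 𝕜) (i j : Fin N) :
    Lop A B K p νh S i j = ∑ q : Bool × Fin N,
      ((p i j * (if q.1 then νh i else 1 - νh i) : ℝ) : 𝕜) •
        ((A + (if q.1 then (1 : 𝕜) else 0) • (B * K q.2)) * S q.2 i
          * (A + (if q.1 then (1 : 𝕜) else 0) • (B * K q.2))ᴴ) := by
  rw [Fintype.sum_prod_type_right]
  simp only [Lop, Matrix.mul_sum, Matrix.sum_mul, Finset.smul_sum, ← Finset.sum_add_distrib]
  refine Finset.sum_congr rfl fun ℓ _ => ?_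
  simp only [Fintype.sum_bool, if_true, Bool.false_eq_true, if_false, zero_smul, add_zero, one_smul,
    conjTranspose_add, conjTranspose_mul, RCLike.ofReal_mul, RCLike.ofReal_sub, RCLike.ofReal_one,
    conjTranspose_zero, Matrix.zero_mul, Matrix.mul_zero, Matrix.add_mul, Matrix.mul_add,
    Matrix.mul_assoc]
  module

/-- Noisy stacked second-moment evolution
`vec²(M^{(k+1)}) = Λ vec²(M^{(k)}) + vec²(C^{(k)})`, and existence of a matrix `Υ`
(independent of `k`, of the initial condition and of the law of the chain) with
`vec²(C^{(k)}) = Υ vec²(Π^{(k)})`. -/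
theorem noisy_secondMoment_linear_evolution
    {𝕜 : Type*} [RCLike 𝕜]
    {N nx nu : ℕ} (hN : 1 ≤ N) (hnx : 1 ≤ nx) (hnu : 1 ≤ nu)
    (A : Matrix (Fin nx) (Fin nx) 𝕜) (B : Matrix (Fin nx) (Fin nu) 𝕜)
    (K : Fin N → Matrix (Fin nu) (Fin nx) 𝕜)
    (p : Fin N → Fin N → ℝ) (hp_nonneg : ∀ i j, 0 ≤ p i j) (hp_row : ∀ i, ∑ j, p i j = 1)
    (νh : Fin N → ℝ) (hνh : ∀ i, νh i ∈ Set.Icc (0 : ℝ) 1)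
    [MeasurableSpace 𝕜] [BorelSpace 𝕜]
    {Ω : Type*} [MeasurableSpace Ω] (μ : Measure Ω) [IsProbabilityMeasure μ]
    (θ : ℤ → Ω → Fin N) (hθ : ∀ t, Measurable (θ t))
    (ν : ℕ → Ω → Bool) (hν : ∀ t, Measurable (ν t))
    (hMarkov : ∀ (k : ℕ) (i j : Fin N) (b : Bool) (E : Set Ω),
      MeasurableSet[pastSig θ ν k] E →
      (μ ({ω | θ ((k : ℤ) + 1) ω = j ∧ ν k ω = b ∧ θ (k : ℤ) ω = i} ∩ E)).toReal
        = p i j * (if b then νh i else 1 - νh i) *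
            (μ ({ω | θ (k : ℤ) ω = i} ∩ E)).toReal)
    (Sw : Matrix (Fin nx) (Fin nx) 𝕜)
    (w : ℕ → Ω → Fin nx → 𝕜) (hw : ∀ t, Measurable (w t))
    (hwGauss : ∀ t, IsGaussianLaw (μ.map (w t)))
    (hwMean : ∀ t r, ∫ ω, w t ω r ∂μ = 0)
    (hwCov : ∀ t, (Matrix.of fun r c => ∫ ω, w t ω r * star (w t ω c) ∂μ) = Sw)
    (hwIdent : ∀ t, ProbabilityTheory.IdentDistrib (w t) (w 0) μ μ)
    (hwIndep : ProbabilityTheory.iIndep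
      (fun o : Option ℕ =>
        Option.elim o
          ((⨆ t : ℤ, MeasurableSpace.comap (θ t) ⊤) ⊔
            ⨆ t : ℕ, MeasurableSpace.comap (ν t) ⊤)
          (fun t => MeasurableSpace.comap (w t) inferInstance)) μ)
    (x0 : Fin nx → 𝕜) (x : ℕ → Ω → Fin nx → 𝕜)
    (hx0 : ∀ ω, x 0 ω = x0)
    (hxrec : ∀ (k : ℕ) (ω : Ω),
      x (k + 1) ω
        = Matrix.mulVec (A + (if ν k ω then (1 : 𝕜) else 0) • (B * K (θ ((k : ℤ) - 1) ω)))
            (x k ω) + w k ω)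
    (Λ : Matrix ((Fin N × Fin N) × Fin nx × Fin nx) ((Fin N × Fin N) × Fin nx × Fin nx) 𝕜)
    (hΛ : ∀ S : Fin N → Fin N → Matrix (Fin nx) (Fin nx) 𝕜,
      vec2 (Lop A B K p νh S) = Matrix.mulVec Λ (vec2 S)) :
    (∀ k : ℕ,
      vec2 (MMom μ θ x (k + 1))
        = Matrix.mulVec Λ (vec2 (MMom μ θ x k))
          + vec2 (fun i j => ((p i j * ∑ ℓ, piP μ θ k ℓ i : ℝ) : 𝕜) • Sw))
    ∧ ∃ Υ : Matrix ((Fin N × Fin N) × Fin nx × Fin nx) ((Fin N × Fin N) × Fin nx × Fin nx) 𝕜,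
        (∀ π : Fin N → Fin N → ℝ,
          vec2 (fun i j => ((p i j * ∑ ℓ, π ℓ i : ℝ) : 𝕜) • Sw)
            = Matrix.mulVec Υ
                (vec2 (fun ℓ i => ((π ℓ i : ℝ) : 𝕜) • (1 : Matrix (Fin nx) (Fin nx) 𝕜))))
        ∧ ∀ k : ℕ,
            vec2 (fun i j => ((p i j * ∑ ℓ, piP μ θ k ℓ i : ℝ) : 𝕜) • Sw)
              = Matrix.mulVec Υ
                  (vec2 (fun ℓ i =>
                    ((piP μ θ k ℓ i : ℝ) : 𝕜) • (1 : Matrix (Fin nx) (Fin nx) 𝕜))) := by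
  classical
  let m : Option ℕ → MeasurableSpace Ω := fun o =>
    Option.elim o
      ((⨆ t : ℤ, MeasurableSpace.comap (θ t) ⊤) ⊔ ⨆ t : ℕ, MeasurableSpace.comap (ν t) ⊤)
      (fun t => MeasurableSpace.comap (w t) inferInstance)
  have hm : ∀ o, m o ≤ ‹MeasurableSpace Ω› := by
    rintro (_ | t)
    · exact sup_le (iSup_le fun t => (hθ t).comap_le) (iSup_le fun t => (hν t).comap_le)
    · exact (hw t).comap_le
  -- `W k` is the σ-algebra of the noises `w_0, …, w_{k-1}`.
  let W : ℕ → MeasurableSpace Ω := fun k => ⨆ o ∈ {o : Option ℕ | ∃ t < k, o = some t}, m o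
  have hW : ∀ k, W k ≤ ‹MeasurableSpace Ω› := fun k => iSup₂_le fun o _ => hm o
  have hWmono : ∀ k, W k ≤ W (k + 1) := fun k =>
    biSup_mono fun o ⟨t, ht, e⟩ => ⟨t, ht.trans k.lt_succ_self, e⟩
  have hwW : ∀ k, m (some k) ≤ W (k + 1) := fun k =>
    le_iSup₂ (f := fun o (_ : o ∈ {o : Option ℕ | ∃ t < k + 1, o = some t}) => m o) (some k)
      ⟨k, k.lt_succ_self, rfl⟩
  have hθm : ∀ t, MeasurableSpace.comap (θ t) ⊤ ≤ m none := fun t =>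
    le_sup_of_le_left (le_iSup (fun t => MeasurableSpace.comap (θ t) ⊤) t)
  have hνm : ∀ t, MeasurableSpace.comap (ν t) ⊤ ≤ m none := fun t =>
    le_sup_of_le_right (le_iSup (fun t => MeasurableSpace.comap (ν t) ⊤) t)
  have hpast_le : ∀ k, pastSig θ ν k ≤ m none := fun k =>
    sup_le (iSup_le fun t => iSup₂_le fun _ _ => hθm t) (iSup₂_le fun t _ => hνm t)
  have hpast_mono : ∀ k, pastSig θ ν k ≤ pastSig θ ν (k + 1) := fun k => by
    refine sup_le_sup (iSup_mono fun t => iSup_mono fun _ => ?_) (iSup_mono fun t => ?_)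
    · exact iSup_mono' fun h => ⟨by push_cast; omega, le_rfl⟩
    · exact iSup_mono' fun h => ⟨by omega, le_rfl⟩
  have hθpast : ∀ (k : ℕ) (t : ℤ), -1 ≤ t → t < k → ∀ s : Set (Fin N),
      MeasurableSet[pastSig θ ν k] (θ t ⁻¹' s) := fun k t h1 h2 s =>
    (le_sup_of_le_left (le_iSup_of_le t (le_iSup₂_of_le h1 h2 le_rfl)) :
      MeasurableSpace.comap (θ t) ⊤ ≤ pastSig θ ν k) _ ⟨s, trivial, rfl⟩
  have hνpast : ∀ (k t : ℕ), t < k → ∀ s : Set Bool,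
      MeasurableSet[pastSig θ ν k] (ν t ⁻¹' s) := fun k t h1 s =>
    (le_sup_of_le_right (le_iSup₂_of_le t h1 le_rfl) :
      MeasurableSpace.comap (ν t) ⊤ ≤ pastSig θ ν k) _ ⟨s, trivial, rfl⟩
  have hindW : ∀ k, Indep (m none) (W k) μ := fun k => by
    have := indep_iSup_of_disjoint hm hwIndep (S := {none}) (T := {o | ∃ t < k, o = some t})
      (by simp)
    simpa [W] using this
  have hindw : ∀ k, Indep (m none ⊔ W k) (m (some k)) μ := fun k => by
    have := indep_iSup_of_disjoint hm hwIndep (S := {none} ∪ {o | ∃ t < k, o = some t})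
      (T := {some k}) (by
        rw [Set.disjoint_singleton_right]
        rintro (h | ⟨t, ht, h⟩)
        · simp at h
        · simp only [Option.some.injEq] at h; omega)
    rw [iSup_union] at this
    simpa [W] using this
  -- Closed-loop matrix on the event `ν_k = q.1`, `θ_{k-1} = q.2`.
  let G : Bool × Fin N → Matrix (Fin nx) (Fin nx) 𝕜 := fun q =>
    A + (if q.1 then (1 : 𝕜) else 0) • (B * K q.2)
  have hrec : ∀ (k : ℕ) (r : Fin nx), (fun ω => x (k + 1) ω r)
      = fun ω => ∑ c, G (ν k ω, θ ((k : ℤ) - 1) ω) r c * x k ω c + w k ω r := by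
    intro k r
    funext ω
    rw [hxrec k ω]
    rfl
  have hpair : ∀ k : ℕ, Measurable[pastSig θ ν (k + 1)] fun ω => (ν k ω, θ ((k : ℤ) - 1) ω) := by
    intro k
    refine Measurable.prodMk (fun s _ => hνpast _ _ k.lt_succ_self s) (fun s _ => ?_)
    exact hθpast _ _ (by omega) (by push_cast; omega) s
  -- `x_k` depends only on the chain and loss history strictly before time `k` and on the noises
  -- strictly before time `k`; in particular it does not involve `θ_k` or `ν_k`.
  have hxmeas : ∀ (k : ℕ) (r : Fin nx), Measurable[pastSig θ ν k ⊔ W k] fun ω => x k ω r := by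
    intro k
    induction k with
    | zero => intro r; simp only [hx0]; exact measurable_const
    | succ k ih =>
      intro r
      rw [hrec]
      have h1 : ∀ c, Measurable[pastSig θ ν (k + 1) ⊔ W (k + 1)]
          fun ω => G (ν k ω, θ ((k : ℤ) - 1) ω) r c := fun c =>
        (measurable_of_finite fun q => G q r c).comp ((hpair k).mono le_sup_left le_rfl)
      have h2 : ∀ c, Measurable[pastSig θ ν (k + 1) ⊔ W (k + 1)] fun ω => x k ω c := fun c =>
        (ih c).mono (sup_le_sup (hpast_mono k) (hWmono k)) le_rfl
      have h3 : Measurable[pastSig θ ν (k + 1) ⊔ W (k + 1)] fun ω => w k ω r :=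
        (measurable_pi_apply r).comp
          ((comap_measurable (w k)).mono ((hwW k).trans le_sup_right) le_rfl)
      exact (Finset.measurable_sum _ fun c _ => (h1 c).mul (h2 c)).add h3
  have hw2 : ∀ k r, MemLp (fun ω => w k ω r) 2 μ := fun k r =>
    memLp_of_gaussianLaw (hw k) (hwGauss k) r
  have hx2 : ∀ (k : ℕ) (r : Fin nx), MemLp (fun ω => x k ω r) 2 μ := by
    intro k
    induction k with
    | zero => intro r; simp only [hx0]; exact memLp_const _
    | succ k ih =>
      intro r
      rw [hrec]
      refine MemLp.add (memLp_finsetSum _ fun c _ => ?_) (hw2 k r)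
      -- The random coefficient takes finitely many values, hence is at most the sum of their norms.
      refine MemLp.of_le_mul (c := ∑ q, ‖G q r c‖) (ih c) ?_ (ae_of_all _ fun ω => ?_)
      · refine AEStronglyMeasurable.mul (Measurable.aestronglyMeasurable ?_) (ih c).1
        exact (measurable_of_finite fun q => G q r c).comp
          ((hpair k).mono ((hpast_le _).trans (hm none)) le_rfl)
      · rw [norm_mul]
        gcongr
        exact Finset.single_le_sum (f := fun q => ‖G q r c‖) (fun q _ => norm_nonneg _)
          (Finset.mem_univ _)
  -- Contribution of the event `ν_k = q.1`, `θ_{k-1} = q.2` to `M_{ij}^{(k+1)}`.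
  have step : ∀ (k : ℕ) (i j : Fin N) (q : Bool × Fin N) (r c : Fin nx),
      ∫ ω in {ω | θ ((k : ℤ) + 1) ω = j ∧ ν k ω = q.1 ∧ θ (k : ℤ) ω = i}
          ∩ {ω | θ ((k : ℤ) - 1) ω = q.2}, x (k + 1) ω r * star (x (k + 1) ω c) ∂μ
        = ((p i j * (if q.1 then νh i else 1 - νh i) : ℝ) : 𝕜)
            * ((G q * MMom μ θ x k q.2 i * (G q)ᴴ) r c + (piP μ θ k q.2 i : 𝕜) * Sw r c) := by
    intro k i j q r c
    set S := {ω | θ ((k : ℤ) + 1) ω = j ∧ ν k ω = q.1 ∧ θ (k : ℤ) ω = i}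
          ∩ {ω | θ ((k : ℤ) - 1) ω = q.2} with hS
    set T := {ω | θ (k : ℤ) ω = i ∧ θ ((k : ℤ) - 1) ω = q.2} with hT
    set y : Ω → Fin nx → 𝕜 := fun ω => G q *ᵥ x k ω with hy
    have hθs : ∀ t a, MeasurableSet[m none] {ω | θ t ω = a} := fun t a =>
      hθm t _ ⟨{a}, trivial, rfl⟩
    have hSm : MeasurableSet[m none] S :=
      ((hθs _ _).inter (MeasurableSet.inter (hνm k _ ⟨{q.1}, trivial, rfl⟩) (hθs _ _))).inter
        (hθs _ _)
    have hTm : MeasurableSet[m none] T := (hθs _ _).inter (hθs _ _)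
    have hST : ∀ E, MeasurableSet[pastSig θ ν k] E → μ.real (S ∩ E)
        = (p i j * (if q.1 then νh i else 1 - νh i)) * μ.real (T ∩ E) := by
      intro E hE
      -- `θ_{k-1}` belongs to the past at time `k`, so its event is absorbed into `E`.
      have hE' := (hθpast k ((k : ℤ) - 1) (by omega) (by omega) {q.2}).inter hE
      have := hMarkov k i j q.1 _ hE'
      rw [← Set.inter_assoc, ← Set.inter_assoc] at this
      exact this
    have hc : 0 ≤ p i j * (if q.1 then νh i else 1 - νh i) := by
      refine mul_nonneg (hp_nonneg i j) ?_
      split_ifs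
      · exact (hνh i).1
      · linarith [(hνh i).2]
    have hym : ∀ a, Measurable[pastSig θ ν k ⊔ W k] fun ω => y ω a := fun a => by
      simp only [hy, mulVec, dotProduct]
      exact Finset.measurable_sum _ fun c _ => (hxmeas k c).const_mul _
    have hy2 : ∀ a, MemLp (fun ω => y ω a) 2 μ := fun a => by
      simp only [hy, mulVec, dotProduct]
      exact memLp_finsetSum _ fun c _ => (hx2 k c).const_mul _
    have hxS : ∫ ω in S, x (k + 1) ω r * star (x (k + 1) ω c) ∂μ
        = ∫ ω in S, (y ω r + w k ω r) * star (y ω c + w k ω c) ∂μ := by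
      refine setIntegral_congr_fun (hm none _ hSm) fun ω hω => ?_
      obtain ⟨⟨-, h1, -⟩, h2⟩ := hω
      have h2' : θ ((k : ℤ) - 1) ω = q.2 := h2
      simp only [hxrec k ω, h1, h2']
      rfl
    rw [hxS, setIntegral_add_noise (y := y) (v := w k) (m₃ := m none ⊔ W k)
      (sup_le (hm none) (hW k)) (hm (some k)) (hindw k) ((le_sup_left : m none ≤ m none ⊔ W k) _ hSm)
      (fun a => (hym a).mono (sup_le_sup_right (hpast_le k) _) le_rfl)
      (fun a => (measurable_pi_apply a).comp (comap_measurable (w k))) hy2 (hw2 k) (hwMean k)]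
    have hyy : StronglyMeasurable[pastSig θ ν k ⊔ W k] fun ω => y ω r * star (y ω c) :=
      Measurable.stronglyMeasurable
        (measurable_mul.comp ((hym r).prodMk (continuous_star.measurable.comp (hym c))))
    rw [setIntegral_eq_mul_of_indep (hpast_le k) (hm none) (hW k) (hindW k) hSm hTm hc hST hyy,
      integral_quadForm (G q) (fun a => (hx2 k a).restrict T) r c]
    have h1 := hST Set.univ MeasurableSet.univ
    rw [Set.inter_univ, Set.inter_univ] at h1
    rw [h1, ← hwCov k, of_apply, RCLike.ofReal_mul (p i j * _) (μ.real T),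
      mul_assoc (RCLike.ofReal _), ← mul_add]
    rfl
  have hM : ∀ k : ℕ, vec2 (MMom μ θ x (k + 1))
        = Matrix.mulVec Λ (vec2 (MMom μ θ x k))
          + vec2 (fun i j => ((p i j * ∑ ℓ, piP μ θ k ℓ i : ℝ) : 𝕜) • Sw) := by
    intro k
    rw [← hΛ]
    funext ⟨⟨j, i⟩, c, r⟩
    simp only [vec2, Pi.add_apply, Matrix.smul_apply, smul_eq_mul]
    have hU : {ω | θ ((k + 1 : ℕ) : ℤ) ω = j ∧ θ (((k + 1 : ℕ) : ℤ) - 1) ω = i}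
        = ⋃ q : Bool × Fin N, {ω | θ ((k : ℤ) + 1) ω = j ∧ ν k ω = q.1 ∧ θ (k : ℤ) ω = i}
          ∩ {ω | θ ((k : ℤ) - 1) ω = q.2} := by
      ext ω
      simp
    have hθs : ∀ t a, MeasurableSet {ω | θ t ω = a} := fun t a => hθ t (measurableSet_singleton a)
    have hxx : Integrable (fun ω => x (k + 1) ω r * star (x (k + 1) ω c)) μ :=
      (hx2 (k + 1) r).integrable_mul (hx2 (k + 1) c).star
    simp only [MMom, of_apply]
    have hpiece : ∀ q : Bool × Fin N,
        MeasurableSet ({ω | θ ((k : ℤ) + 1) ω = j ∧ ν k ω = q.1 ∧ θ (k : ℤ) ω = i}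
          ∩ {ω | θ ((k : ℤ) - 1) ω = q.2}) := fun q =>
      ((hθs _ _).inter ((hν k (measurableSet_singleton q.1)).inter (hθs _ _))).inter (hθs _ _)
    rw [hU, integral_iUnion_fintype hpiece
      (fun q q' hne => by
        rw [Function.onFun, Set.disjoint_left]
        rintro ω ⟨⟨-, h1, -⟩, h2⟩ ⟨⟨-, h3, -⟩, h4⟩
        exact hne (Prod.ext (h1.symm.trans h3) (h2.symm.trans h4)))
      (fun q => hxx.integrableOn)]
    simp_rw [step, mul_add]
    rw [Finset.sum_add_distrib, Lop_eq_sum, Matrix.sum_apply]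
    congr 1
    rw [Fintype.sum_prod_type_right, Finset.mul_sum, RCLike.ofReal_sum, Finset.sum_mul]
    refine Finset.sum_congr rfl fun ℓ _ => ?_
    rw [Fintype.sum_bool]
    simp only [if_true, Bool.false_eq_true, if_false, RCLike.ofReal_mul, RCLike.ofReal_sub,
      RCLike.ofReal_one]
    ring
  have hΥ : ∃ Υ : Matrix ((Fin N × Fin N) × Fin nx × Fin nx) ((Fin N × Fin N) × Fin nx × Fin nx) 𝕜,
      ∀ π : Fin N → Fin N → ℝ,
        vec2 (fun i j => ((p i j * ∑ ℓ, π ℓ i : ℝ) : 𝕜) • Sw)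
          = Matrix.mulVec Υ
              (vec2 (fun ℓ i => ((π ℓ i : ℝ) : 𝕜) • (1 : Matrix (Fin nx) (Fin nx) 𝕜))) := by
    -- The probability `π_{ℓi}` is read off the `(0,0)` entry of the block `π_{ℓi} I`.
    let z : Fin nx := ⟨0, hnx⟩
    refine ⟨Matrix.of fun a b =>
      if b.1.1 = a.1.2 ∧ b.2 = (z, z) then (p a.1.2 a.1.1 : 𝕜) * Sw a.2.2 a.2.1 else 0, ?_⟩
    intro π
    funext ⟨⟨j, i⟩, c, r⟩
    simp only [vec2, mulVec, dotProduct, of_apply, Matrix.smul_apply, smul_eq_mul,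
      Fintype.sum_prod_type (α₁ := Fin N × Fin N), Fintype.sum_prod_type (α₁ := Fin N), ite_and,
      ite_mul, zero_mul]
    simp [Finset.mul_sum, Finset.sum_mul]
    refine Finset.sum_congr rfl fun ℓ _ => ?_
    ring
  obtain ⟨Υ, h⟩ := hΥ
  exact ⟨hM, Υ, h, fun k => h _⟩
end
end
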